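/- arXiv:1207.1140 — 2 statements merged into one kernel-verified Lean document; each statement's English description precedes it below -/
import Mathlib

section
/- Let q ≥ 2 and L ≥ 2 be integers, let C ⊆ [q]^n be a code, and let ε ∈ [0,1]. If every subset of L distinct codewords of C has average pairwise relative Hamming distance at least (1−1/q)(1−ε), then C is ((1−1/q)(1−√(ε+1/L)), L−1)-list decodable. -/
open scoped BigOperators

/-- Relative Hamming distance between two strings of length n. -/
noncomputable def relDist {n : ℕ} {A : Type*} (x y : Fin n → A) : ℝ :=
  ({i : Fin n | x i ≠ y i}.ncard : ℝ) / (n : ℝ)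

/-- A code C ⊆ A^n is (ρ, L)-list decodable if every Hamming ball of relative
radius (strictly) ρ contains at most L codewords. -/
def listDecodable {n : ℕ} {A : Type*} (C : Set (Fin n → A)) (ρ L : ℝ) : Prop :=
  ∀ y : Fin n → A, ({c | c ∈ C ∧ relDist c y < ρ}.ncard : ℝ) ≤ L

/-- Average pairwise relative Hamming distance of an L-tuple of codewords. -/
noncomputable def avgPairDist {n L : ℕ} {A : Type*} (c : Fin L → (Fin n → A)) : ℝ :=
  (∑ i : Fin L, ∑ j : Fin L, if i < j then relDist (c i) (c j) else 0) / (L.choose 2 : ℝ)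


/-- Centered indicator embedding of a string. -/
noncomputable def emb {n q : ℕ} (x : Fin n → Fin q) (p : Fin n × Fin q) : ℝ :=
  (if x p.1 = p.2 then 1 else 0) - 1 / (q : ℝ)

lemma relDist_mul {n q : ℕ} (hn : 0 < n) (x y : Fin n → Fin q) :
    (n : ℝ) * relDist x y = ∑ i, (if x i = y i then (0 : ℝ) else 1) := by
  have hn' : (n : ℝ) ≠ 0 := by positivity
  unfold relDist
  rw [mul_div_cancel₀ _ hn', Set.ncard_eq_toFinset_card']
  rw [show (∑ i, (if x i = y i then (0 : ℝ) else 1)) = ∑ i, (if x i ≠ y i then (1 : ℝ) else 0) from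
    Finset.sum_congr rfl (fun i _ => by by_cases h : x i = y i <;> simp [h])]
  rw [Finset.sum_boole]
  congr 2
  ext i
  simp

lemma emb_inner {n q : ℕ} (hn : 0 < n) (hq : 2 ≤ q) (x y : Fin n → Fin q) :
    ∑ p, emb x p * emb y p = (n : ℝ) * ((1 - 1 / (q : ℝ)) - relDist x y) := by
  have hq' : (q : ℝ) ≠ 0 := by positivity
  rw [mul_sub, relDist_mul hn, Fintype.sum_prod_type]
  have h : ∀ i, ∑ a, emb x (i, a) * emb y (i, a)
      = (1 - 1 / (q : ℝ)) - (if x i = y i then (0 : ℝ) else 1) := by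
    intro i
    simp only [emb, sub_mul, mul_sub, Finset.sum_sub_distrib, ← Finset.mul_sum, ← Finset.sum_mul,
      Finset.sum_ite_eq, Finset.mem_univ, if_true, Finset.sum_const, Finset.card_univ,
      Fintype.card_fin, nsmul_eq_mul]
    have h2 : ∑ a, (if x i = a then (1 : ℝ) else 0) * (if y i = a then (1 : ℝ) else 0)
        = if x i = y i then 1 else 0 := by
      simp [eq_comm]
    rw [h2]
    by_cases hxy : x i = y i
    · simp only [hxy, if_true]; field_simp; ring
    · simp only [hxy, if_false]; field_simp; ring
  simp only [h, Finset.sum_sub_distrib, Finset.sum_const, Finset.card_univ,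
      Fintype.card_fin, nsmul_eq_mul]
  ring

lemma relDist_self' {n q : ℕ} (x : Fin n → Fin q) : relDist x x = 0 := by
  simp [relDist]

lemma relDist_comm' {n q : ℕ} (x y : Fin n → Fin q) : relDist x y = relDist y x := by
  simp [relDist, ne_comm]

lemma sum_pairs {n q L : ℕ} (hL : 2 ≤ L) (c : Fin L → (Fin n → Fin q)) :
    ∑ i, ∑ j, relDist (c i) (c j) = (L : ℝ) * (L - 1) * avgPairDist c := by
  have h1 : ∀ i j, relDist (c i) (c j) = (if i < j then relDist (c i) (c j) else 0)
      + (if j < i then relDist (c j) (c i) else 0) := by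
    intro i j
    rcases lt_trichotomy i j with h | h | h
    · simp [h, h.not_gt]
    · subst h; simp [relDist_self']
    · simp [h, h.not_gt, relDist_comm']
  have h2 : ∑ i, ∑ j, relDist (c i) (c j)
      = 2 * ∑ i, ∑ j, (if i < j then relDist (c i) (c j) else 0) := by
    calc _ = ∑ i, ∑ j, ((if i < j then relDist (c i) (c j) else 0)
      + (if j < i then relDist (c j) (c i) else 0)) :=
          Finset.sum_congr rfl fun i _ => Finset.sum_congr rfl fun j _ => h1 i j
      _ = _ := by
        simp only [Finset.sum_add_distrib]
        rw [Finset.sum_comm (f := fun i j => if j < i then relDist (c j) (c i) else 0)]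
        ring
  have hL' : (2 : ℝ) ≤ L := by exact_mod_cast hL
  rw [h2, avgPairDist, Nat.cast_choose_two]
  have : (L : ℝ) - 1 ≠ 0 := by linarith
  field_simp

/-- Simplified average-distance Johnson bound near radius 1 − 1/q.  If every
L distinct codewords of C have average pairwise relative distance at least
(1 − 1/q)(1 − ε), then C is ((1 − 1/q)(1 − √(ε + 1/L)), L − 1)-list decodable. -/
theorem stmt4 (q L n : ℕ) (hq : 2 ≤ q) (hL : 2 ≤ L)
    (C : Set (Fin n → Fin q)) (ε : ℝ) (hε0 : 0 ≤ ε) (hε1 : ε ≤ 1)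
    (havg : ∀ c : Fin L → (Fin n → Fin q),
      Function.Injective c → (∀ i, c i ∈ C) →
        (1 - 1 / (q : ℝ)) * (1 - ε) ≤ avgPairDist c) :
    listDecodable C ((1 - 1 / (q : ℝ)) * (1 - Real.sqrt (ε + 1 / (L : ℝ)))) ((L : ℝ) - 1) := by
  intro y
  by_contra hcon
  push Not at hcon
  have hLS : L ≤ {c | c ∈ C ∧ relDist c y <
      (1 - 1 / (q : ℝ)) * (1 - Real.sqrt (ε + 1 / (L : ℝ)))}.ncard := by
    have : (L : ℝ) < ({c | c ∈ C ∧ relDist c y <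
      (1 - 1 / (q : ℝ)) * (1 - Real.sqrt (ε + 1 / (L : ℝ)))}.ncard : ℝ) + 1 := by linarith
    have h : L < {c | c ∈ C ∧ relDist c y <
      (1 - 1 / (q : ℝ)) * (1 - Real.sqrt (ε + 1 / (L : ℝ)))}.ncard + 1 := by exact_mod_cast this
    omega
  obtain ⟨T, hTS, hTc⟩ := Set.exists_subset_card_eq hLS
  have hcard : Nat.card T = L := hTc
  let e : Fin L ≃ T := (Finite.equivFinOfCardEq hcard).symm
  let c : Fin L → (Fin n → Fin q) := fun i => (e i : Fin n → Fin q)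
  have hinj : Function.Injective c := Subtype.val_injective.comp e.injective
  have hmem : ∀ i, c i ∈ C := fun i => (hTS (e i).2).1
  have hdist : ∀ i, relDist (c i) y <
      (1 - 1 / (q : ℝ)) * (1 - Real.sqrt (ε + 1 / (L : ℝ))) := fun i => (hTS (e i).2).2
  have hn : 0 < n := by
    rcases Nat.eq_zero_or_pos n with h | h
    · subst h
      have := @hinj ⟨0, by omega⟩ ⟨1, by omega⟩ (Subsingleton.elim _ _)
      simp at this
    · exact h
  have hav := havg c hinj hmem
  have hpairs := sum_pairs hL c
  have hL' : (2 : ℝ) ≤ L := by exact_mod_cast hL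
  have hq' : (2 : ℝ) ≤ q := by exact_mod_cast hq
  have hn' : (0 : ℝ) < n := by exact_mod_cast hn
  have hθ : 0 < 1 - 1 / (q : ℝ) := by
    have : 1 / (q : ℝ) < 1 := by rw [div_lt_one (by linarith)]; linarith
    linarith
  set θ := 1 - 1 / (q : ℝ) with hθdef
  have hs2 : Real.sqrt (ε + 1 / (L : ℝ)) ^ 2 = ε + 1 / (L : ℝ) := Real.sq_sqrt (by positivity)
  have hs0 : 0 ≤ Real.sqrt (ε + 1 / (L : ℝ)) := Real.sqrt_nonneg _
  set s := Real.sqrt (ε + 1 / (L : ℝ)) with hs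
  have hCS := Finset.sum_mul_sq_le_sq_mul_sq Finset.univ (fun p => ∑ k, emb (c k) p) (emb y)
  have hy : ∑ p, emb y p ^ 2 = n * θ := by
    simp only [pow_two]
    rw [emb_inner hn hq, relDist_self', sub_zero]
  have hcy : ∑ p, (∑ k, emb (c k) p) * emb y p = n * ∑ k, (θ - relDist (c k) y) := by
    simp only [Finset.sum_mul]
    rw [Finset.sum_comm, Finset.mul_sum]
    exact Finset.sum_congr rfl fun k _ => emb_inner hn hq _ _
  have hcc : ∑ p, (∑ k, emb (c k) p) ^ 2 = n * (L ^ 2 * θ - L * (L - 1) * avgPairDist c) := by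
    rw [← hpairs]
    simp only [pow_two, Finset.sum_mul_sum]
    rw [Finset.sum_comm]
    simp only [Finset.sum_comm (s := (Finset.univ : Finset (Fin n × Fin q)))]
    simp only [emb_inner hn hq, ← Finset.mul_sum, Finset.sum_sub_distrib, Finset.sum_const,
      Finset.card_univ, Fintype.card_fin, nsmul_eq_mul]
    ring
  have hlow : L * (θ * s) < ∑ k, (θ - relDist (c k) y) := by
    have : ∑ k : Fin L, θ * s < ∑ k, (θ - relDist (c k) y) := by
      apply Finset.sum_lt_sum_of_nonempty
      · exact ⟨⟨0, by omega⟩, Finset.mem_univ _⟩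
      · intro k _
        have := hdist k
        linarith
    simpa using this
  rw [hcy, hy, hcc] at hCS
  have hup : L ^ 2 * θ - L * (L - 1) * avgPairDist c ≤ L ^ 2 * θ * s ^ 2 := by
    have h1 : (L : ℝ) * (L - 1) * (θ * (1 - ε)) ≤ L * (L - 1) * avgPairDist c :=
      mul_le_mul_of_nonneg_left hav (by nlinarith)
    have h2 : (L : ℝ) ^ 2 * θ * s ^ 2 = θ * (L ^ 2 * ε + L) := by
      rw [hs2]; field_simp
    rw [h2]
    have h3 : 0 ≤ θ * L * ε := by positivity
    nlinarith
  have hsq : (L * (θ * s)) ^ 2 < (∑ k, (θ - relDist (c k) y)) ^ 2 :=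
    pow_lt_pow_left₀ hlow (by positivity) two_ne_zero
  have h4 : (n : ℝ) * (L ^ 2 * θ - L * (L - 1) * avgPairDist c) * (n * θ)
      ≤ n * (L ^ 2 * θ * s ^ 2) * (n * θ) := by gcongr
  have h5 : (n : ℝ) ^ 2 * (L * (θ * s)) ^ 2 < n ^ 2 * (∑ k, (θ - relDist (c k) y)) ^ 2 := by gcongr
  nlinarith
end

section
/- Let q ≥ 2 and L ≥ 2 be integers and let c_1, …, c_L ∈ [q]^n. Then the average pairwise relative Hamming distance δ := (Σ_{1≤i<j≤L} δ(c_i,c_j)) / (L choose 2) satisfies δ = (L²(q−1)n − ‖Σ_{i=1}^{L} φ(c_i)‖₂²) / (q·L·(L−1)·n). -/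
open scoped BigOperators

/-- Simplex encoding of a symbol x ∈ {0,…,q−1}: the vector (ω^{x·α})_{α ∈ {1,…,q−1}}
in ℂ^{q−1}, where ω = e^{2πi/q}. -/
noncomputable def simplexEnc (q : ℕ) (x : ℕ) (α : Fin (q - 1)) : ℂ :=
  Complex.exp (2 * (Real.pi : ℂ) * Complex.I * (x : ℂ) * (((α : ℕ) : ℂ) + 1) / (q : ℂ))

/-- Coordinatewise extension of the simplex encoding to strings in [q]^n,
giving a vector in ℂ^{(q−1)n}. -/
noncomputable def simplexEncVec (q n : ℕ) (x : Fin n → Fin q) : Fin n × Fin (q - 1) → ℂ :=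
  fun p => simplexEnc q (x p.1 : ℕ) p.2

/-- Hermitian inner product ⟨v,w⟩ = Σ_i v_i w_i^*. -/
noncomputable def cinner {ι : Type*} [Fintype ι] (v w : ι → ℂ) : ℂ :=
  ∑ i, v i * (starRingEnd ℂ) (w i)

/-- Squared Euclidean norm of a complex vector. -/
noncomputable def normSq2 {ι : Type*} [Fintype ι] (v : ι → ℂ) : ℝ :=
  ∑ i, Complex.normSq (v i)

lemma simplexEnc_eq (q x : ℕ) (α : Fin (q - 1)) :
    simplexEnc q x α =
      (Complex.exp (2 * (Real.pi : ℂ) * Complex.I / (q : ℂ)) ^ x) ^ ((α : ℕ) + 1) := by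
  unfold simplexEnc
  rw [← Complex.exp_nat_mul, ← Complex.exp_nat_mul]
  congr 1
  push_cast
  ring

lemma simplexEnc_inner (q : ℕ) (hq : 2 ≤ q) (x y : Fin q) :
    ∑ α : Fin (q - 1), simplexEnc q x α * (starRingEnd ℂ) (simplexEnc q y α) =
      (q : ℂ) - 1 - q * (if x ≠ y then 1 else 0) := by
  have hw := Complex.isPrimitiveRoot_exp q (by omega)
  simp only [simplexEnc_eq]
  set w := Complex.exp (2 * (Real.pi : ℂ) * Complex.I / (q : ℂ)) with hwdef
  have hn : ‖w‖ = 1 := hw.norm'_eq_one (by omega)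
  have hw0 : w ≠ 0 := Complex.exp_ne_zero _
  have hc : (starRingEnd ℂ) w = w⁻¹ := (Complex.inv_eq_conj hn).symm
  have h1 : ∀ α : Fin (q - 1), (w ^ (x : ℕ)) ^ ((α : ℕ) + 1) *
      (starRingEnd ℂ) ((w ^ (y : ℕ)) ^ ((α : ℕ) + 1)) =
        (w ^ (x : ℕ) / w ^ (y : ℕ)) ^ ((α : ℕ) + 1) := by
    intro α
    simp only [map_pow, hc, inv_pow, div_eq_mul_inv]
    simp only [mul_pow, inv_pow]
  rw [Finset.sum_congr rfl (fun α _ => h1 α)]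
  set z := w ^ (x : ℕ) / w ^ (y : ℕ) with hz
  have hzq : z ^ q = 1 := by
    rw [hz, div_pow, ← pow_mul, ← pow_mul, mul_comm, pow_mul, mul_comm, pow_mul, hw.pow_eq_one]
    simp
  have hs : ∑ α : Fin (q - 1), z ^ ((α : ℕ) + 1) = ∑ k ∈ Finset.range q, z ^ k - 1 := by
    rw [Fin.sum_univ_eq_sum_range (fun k => z ^ (k + 1)) (q - 1)]
    obtain ⟨m, rfl⟩ : ∃ m, q = m + 1 := ⟨q - 1, by omega⟩
    rw [Finset.sum_range_succ']
    simp
  rw [hs]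
  by_cases h : x = y
  · have : z = 1 := by rw [hz, h]; exact div_self (pow_ne_zero _ hw0)
    simp [this, h]
  · have hz1 : z ≠ 1 := by
      intro h1
      rw [hz, div_eq_one_iff_eq (pow_ne_zero _ hw0)] at h1
      exact h (Fin.ext (hw.pow_inj x.2 y.2 h1))
    have : ∑ k ∈ Finset.range q, z ^ k = 0 := by
      rw [geom_sum_eq hz1, hzq]; simp
    simp [this, h]

lemma normSq2_sum (q L n : ℕ) (hq : 2 ≤ q) (c : Fin L → (Fin n → Fin q)) :
    normSq2 (fun p => ∑ i : Fin L, simplexEncVec q n (c i) p) =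
      (L : ℝ) ^ 2 * ((q : ℝ) - 1) * n -
        q * ∑ i : Fin L, ∑ j : Fin L, ∑ k : Fin n, if c i k ≠ c j k then (1 : ℝ) else 0 := by
  apply Complex.ofReal_injective
  unfold normSq2 simplexEncVec
  push_cast
  simp only [← Complex.mul_conj, map_sum, Finset.sum_mul_sum]
  have : ∀ k : Fin n, ∑ α : Fin (q - 1), ∑ i : Fin L, ∑ j : Fin L,
      simplexEnc q (c i k) α * (starRingEnd ℂ) (simplexEnc q (c j k) α) =
      ∑ i : Fin L, ∑ j : Fin L, ((q : ℂ) - 1 - q * (if c i k ≠ c j k then 1 else 0)) := by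
    intro k
    rw [Finset.sum_comm]
    refine Finset.sum_congr rfl fun i _ => ?_
    rw [Finset.sum_comm]
    exact Finset.sum_congr rfl fun j _ => simplexEnc_inner q hq _ _
  rw [Fintype.sum_prod_type, Finset.sum_congr rfl fun k _ => this k, Finset.sum_comm]
  rw [Finset.sum_congr rfl fun i _ => Finset.sum_comm]
  simp only [Finset.sum_sub_distrib, ← Finset.mul_sum, Finset.sum_const, Finset.card_univ,
    Fintype.card_fin, nsmul_eq_mul, apply_ite (Complex.ofReal), Complex.ofReal_one,
    Complex.ofReal_zero]
  ring

lemma sum_sym {L : ℕ} (D : Fin L → Fin L → ℝ) (h0 : ∀ i, D i i = 0)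
    (hs : ∀ i j, D i j = D j i) :
    ∑ i, ∑ j, D i j = 2 * ∑ i, ∑ j, if i < j then D i j else 0 := by
  have h1 : ∑ i, ∑ j, D i j =
      ∑ i, ∑ j, ((if i < j then D i j else 0) + (if j < i then D j i else 0)) := by
    refine Finset.sum_congr rfl fun i _ => Finset.sum_congr rfl fun j _ => ?_
    rcases lt_trichotomy i j with h | h | h
    · simp [h, h.not_gt]
    · simp [h, h0]
    · simp [h, h.not_gt, hs i j]
  rw [h1]
  simp only [Finset.sum_add_distrib]
  rw [Finset.sum_comm (f := fun i j => if j < i then D j i else 0)]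
  ring

lemma relDist_eq {n : ℕ} {A : Type*} [DecidableEq A] (x y : Fin n → A) :
    relDist x y = (∑ k : Fin n, if x k ≠ y k then (1 : ℝ) else 0) / n := by
  unfold relDist
  rw [Finset.sum_boole, Set.ncard_eq_toFinset_card']
  congr 3
  ext; simp

/-- The average pairwise relative Hamming distance of c_1, …, c_L ∈ [q]^n
equals (L²(q−1)n − ‖Σ_i φ(c_i)‖₂²) / (qL(L−1)n). -/
theorem stmt6 (q L n : ℕ) (hq : 2 ≤ q) (hL : 2 ≤ L) (c : Fin L → (Fin n → Fin q)) :
    avgPairDist c =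
      ((L : ℝ) ^ 2 * ((q : ℝ) - 1) * n -
          normSq2 (fun p => ∑ i : Fin L, simplexEncVec q n (c i) p)) /
        ((q : ℝ) * L * ((L : ℝ) - 1) * n) := by
  rw [normSq2_sum q L n hq c]
  have hsym := sum_sym (fun i j => relDist (c i) (c j))
    (fun i => by simp [relDist]) (fun i j => by simp only [relDist, ne_comm])
  have hD : ∑ i : Fin L, ∑ j : Fin L, relDist (c i) (c j) =
      (∑ i : Fin L, ∑ j : Fin L, ∑ k : Fin n, if c i k ≠ c j k then (1 : ℝ) else 0) / n := by
    simp only [relDist_eq, Finset.sum_div]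
  unfold avgPairDist
  rw [Nat.cast_choose_two]
  rw [hD] at hsym
  set S := ∑ i : Fin L, ∑ j : Fin L, ∑ k : Fin n, if c i k ≠ c j k then (1 : ℝ) else 0
  have hT : (∑ i : Fin L, ∑ j : Fin L, if i < j then relDist (c i) (c j) else 0) =
      S / n / 2 := by linarith
  rw [hT]
  have hq0 : (q : ℝ) ≠ 0 := by positivity
  have hL2 : (2 : ℝ) ≤ L := by exact_mod_cast hL
  have hL0 : (L : ℝ) ≠ 0 := by linarith
  have hL1 : (L : ℝ) - 1 ≠ 0 := by linarith
  rcases eq_or_ne (n : ℝ) 0 with hn | hn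
  · simp [hn]
  · field_simp
    ring
end
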